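/- Let G be a graph on vertex set {1,…,s} with positive integer weights indexed in non-decreasing order w_1 ≤ w_2 ≤ … ≤ w_s, and suppose G is l-connected and (r,w)-connected with r ≥ l ≥ 1 and s ≥ l + 1. For each i with l+1 ≤ i ≤ s, define A_i = {1,…,k_i} where k_i is the largest integer k with i-1 ≤ k ≤ s and w_{k-i+2} + w_{k-i+3} + … + w_k ≤ r - 1, and A_i = ∅ if no such k exists. Assume A_{l+1} ≠ ∅, set h = max{ i : l+1 ≤ i ≤ s and A_i ≠ ∅ }, and b_i = s - |A_i| for i = l+1,…,h. Then diam(G) ≤ ⌊(s - 2 + Σ_{i=l+1}^{h} b_i)/h⌋ + 1. -/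

import Mathlib

open Classical

/-- A set `X` of vertices *disconnects* a graph `G` if after removing `X` there remain
two vertices that are not connected by a path (this forces `|V| ≥ |X| + 2`). -/
def Disconnects {V : Type*} (G : SimpleGraph V) (X : Set V) : Prop :=
  ∃ u v : (Xᶜ : Set V), ¬ (G.induce Xᶜ).Reachable u v

/-- `G` is `l`-connected: it has at least `l` vertices and cannot be disconnected by
removing `l - 1` or fewer vertices. -/
def LConnected {V : Type*} [Fintype V] (G : SimpleGraph V) (l : ℕ) : Prop :=
  l ≤ Fintype.card V ∧ ∀ X : Finset V, X.card < l → ¬ Disconnects G (↑X : Set V)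

/-- `G` is `(r,w)`-connected: the removal of any set of vertices whose weights sum to
at most `r - 1` does not disconnect `G`. -/
def WeightConnected {V : Type*} (G : SimpleGraph V) (r : ℕ) (w : V → ℕ) : Prop :=
  ∀ X : Finset V, (∑ v ∈ X, w v) < r → ¬ Disconnects G (↑X : Set V)

/-- `Good s r w i k` says `i - 1 ≤ k ≤ s` and the sum of the `i - 1` weights
`w_{k-i+2} + ⋯ + w_k` is at most `r - 1`. (Here vertices are indexed `1, …, s` and the
weights are non-decreasing.) -/
def Good (s r : ℕ) (w : ℕ → ℕ) (i k : ℕ) : Prop :=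
  i - 1 ≤ k ∧ k ≤ s ∧ (∑ j ∈ Finset.Icc (k + 2 - i) k, w j) ≤ r - 1

/-- `kmaxOf s r w i` is the largest `k` with `Good s r w i k` (junk value if none exists). -/
noncomputable def kmaxOf (s r : ℕ) (w : ℕ → ℕ) (i : ℕ) : ℕ :=
  sSup {k | Good s r w i k}

/-- The set `A_i = {1, …, k_i}` where `k_i` is the largest `k` with `i-1 ≤ k ≤ s` and
`w_{k-i+2} + ⋯ + w_k ≤ r - 1`, and `A_i = ∅` if no such `k` exists. -/
noncomputable def Aset (s r : ℕ) (w : ℕ → ℕ) (i : ℕ) : Finset ℕ :=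
  if ∃ k, Good s r w i k then Finset.Icc 1 (kmaxOf s r w i) else ∅

/-- `h = max { i : l+1 ≤ i ≤ s and A_i ≠ ∅ }`. -/
noncomputable def hmaxOf (s l r : ℕ) (w : ℕ → ℕ) : ℕ :=
  sSup {i | l + 1 ≤ i ∧ i ≤ s ∧ Aset s r w i ≠ ∅}

/-- `b_i = s - |A_i|`. -/
noncomputable def bOf (s r : ℕ) (w : ℕ → ℕ) (i : ℕ) : ℕ :=
  s - (Aset s r w i).card

/-!
If every disconnecting set of vertices of `G` has total cost at least `m`, then so does each of the
`dist u v - 1` distance layers strictly between `u` and `v`; as these layers are disjoint,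
`(dist u v - 1) * m` is at most the cost of all vertices other than `u` and `v`.

Let a vertex cost `1` plus the number of `i ∈ {l+1, …, m}` for which it lies outside `A_i`. A
disconnecting set `X` has at least `l` elements, and it cannot be contained in `A_i` when
`|X| < i ≤ m`, since its weight would then be at most `w_{k_i-i+2} + ⋯ + w_{k_i} ≤ r - 1`. So `X`
pays `1` for each of its elements and at least `1` for each such `i`, in total at least `m`, while
all vertices other than `u` and `v` together cost at most `s - 2 + Σ b_i`.
-/

section WeightedSums

open Finset

variable {M : Type*} [AddCommMonoid M] [PartialOrder M] [IsOrderedAddMonoid M]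

theorem sum_le_sum_of_card_le_of_threshold {ι : Type*} [DecidableEq ι] {S T : Finset ι}
    {f : ι → M} {c : M} (hc : 0 ≤ c) (hcard : #T ≤ #S) (hT : ∀ x ∈ T \ S, f x ≤ c)
    (hS : ∀ x ∈ S \ T, c ≤ f x) : ∑ x ∈ T, f x ≤ ∑ x ∈ S, f x := by
  have hdiff : #(T \ S) ≤ #(S \ T) := by
    have hTS := card_inter_add_card_sdiff T S
    have hST := card_inter_add_card_sdiff S T
    rw [inter_comm] at hST
    omega
  calc ∑ x ∈ T, f x = ∑ x ∈ T ∩ S, f x + ∑ x ∈ T \ S, f x := (sum_inter_add_sum_sdiff T S f).symm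
    _ ≤ ∑ x ∈ S ∩ T, f x + ∑ x ∈ S \ T, f x := by
      rw [inter_comm]
      refine add_le_add_right ?_ _
      calc ∑ x ∈ T \ S, f x ≤ #(T \ S) • c := sum_le_card_nsmul _ _ _ hT
        _ ≤ #(S \ T) • c := nsmul_le_nsmul_left hc hdiff
        _ ≤ ∑ x ∈ S \ T, f x := card_nsmul_le_sum _ _ _ hS
    _ = ∑ x ∈ S, f x := sum_inter_add_sum_sdiff S T f

theorem sum_le_sum_Ioc_of_monotoneOn {w : ℕ → M} {k n : ℕ} {T : Finset ℕ}
    (hw : MonotoneOn w (Set.Ioc 0 k)) (hw₀ : ∀ j ∈ Set.Ioc 0 k, 0 ≤ w j)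
    (hTk : T ⊆ Ioc 0 k) (hTn : #T ≤ n) :
    ∑ j ∈ T, w j ≤ ∑ j ∈ Ioc (k - n) k, w j := by
  by_cases hT : T ⊆ Ioc (k - n) k
  · exact sum_le_sum_of_subset_of_nonneg hT fun j hj _ ↦ hw₀ j (by grind)
  · obtain ⟨t, htT, ht⟩ := not_subset.mp hT
    have hmid : k - n ∈ Set.Ioc 0 k := by grind
    refine sum_le_sum_of_card_le_of_threshold (hw₀ _ hmid) (by simp; grind) (fun j hj ↦ ?_)
      fun j hj ↦ ?_
    · exact hw (by grind) hmid (by grind)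
    · exact hw hmid (by grind) (by grind)

end WeightedSums

section DistanceLayers

open Finset SimpleGraph

variable {V : Type*} {G : SimpleGraph V}

theorem disconnects_setOf_dist_eq {u v : V} {j : ℕ} (hj : 0 < j) (hjv : j < G.dist u v) :
    Disconnects G {x | G.dist u x = j} := by
  refine ⟨⟨u, by simp; omega⟩, ⟨v, by simp; omega⟩, fun huv ↦ ?_⟩
  have dist_lt : ∀ x, (G.induce {x | G.dist u x = j}ᶜ).Reachable ⟨u, by simp; omega⟩ x →
      G.dist u x < j := by
    intro x hx
    rw [reachable_iff_reflTransGen] at hx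
    induction hx with
    | refl => simpa
    | @tail x y _ hxy ih =>
      have hy : G.dist u y ≠ j := y.2
      have := (show G.Adj x y from hxy).diff_dist_adj (u := u)
      omega
  exact hjv.not_gt (dist_lt _ huv)

namespace WeightConnected

variable {m : ℕ} {c : V → ℕ}

theorem preconnected (hG : WeightConnected G m c) (hm : 0 < m) : G.Preconnected := by
  intro u v
  by_contra huv
  refine hG ∅ (by simpa) ⟨⟨u, by simp⟩, ⟨v, by simp⟩, fun h ↦ huv ?_⟩
  exact h.map (Embedding.induce _).toHom

theorem dist_sub_one_mul_le_sum [Fintype V] [DecidableEq V] (hG : WeightConnected G m c)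
    (u v : V) : (G.dist u v - 1) * m ≤ ∑ x ∈ {u, v}ᶜ, c x := by
  have layer_cost : ∀ j ∈ Ioo 0 (G.dist u v), m ≤ ∑ x with G.dist u x = j, c x := by
    intro j hj
    rw [mem_Ioo] at hj
    by_contra! hlt
    exact hG _ hlt (by simpa using disconnects_setOf_dist_eq hj.1 hj.2)
  calc (G.dist u v - 1) * m = ∑ _j ∈ Ioo 0 (G.dist u v), m := by simp
    _ ≤ ∑ j ∈ Ioo 0 (G.dist u v), ∑ x with G.dist u x = j, c x := sum_le_sum layer_cost
    _ = ∑ x with G.dist u x ∈ Ioo 0 (G.dist u v), c x := sum_fiberwise_eq_sum_filter _ _ _ _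
    _ ≤ ∑ x ∈ {u, v}ᶜ, c x := by
      refine sum_le_sum_of_subset fun x hx ↦ ?_
      simp only [mem_filter_univ, mem_Ioo] at hx
      simp only [mem_compl, mem_insert, mem_singleton, not_or]
      exact ⟨by rintro rfl; simp at hx, by rintro rfl; omega⟩

theorem ediam_le [Fintype V] [DecidableEq V] {N : ℕ} (hG : WeightConnected G m c) (hm : 0 < m)
    (hN : ∀ u v, u ≠ v → ∑ x ∈ {u, v}ᶜ, c x ≤ N) : G.ediam ≤ (N / m + 1 : ℕ) := by
  refine ediam_le_of_edist_le fun u v ↦ ?_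
  rw [← (hG.preconnected hm u v).coe_dist_eq_edist, Nat.cast_le]
  obtain rfl | huv := eq_or_ne u v
  · simp
  · rw [← Nat.sub_le_iff_le_add, Nat.le_div_iff_mul_le hm]
    exact (hG.dist_sub_one_mul_le_sum u v).trans (hN u v huv)

end WeightConnected

end DistanceLayers

section InitialSegments

open Finset

variable {s r i k : ℕ} {w : ℕ → ℕ}

theorem Good.anti {i' : ℕ} (h : Good s r w i k) (hi : i' ≤ i) : Good s r w i' k := by
  obtain ⟨hik, hks, hsum⟩ := h
  exact ⟨by omega, hks,
    (sum_le_sum_of_subset (Icc_subset_Icc_left (by omega))).trans hsum⟩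

theorem good_kmaxOf (h : ∃ k, Good s r w i k) : Good s r w i (kmaxOf s r w i) :=
  Nat.sSup_mem (s := {k | Good s r w i k}) h ⟨s, fun _ hk ↦ hk.2.1⟩

theorem exists_good_of_aset_ne_empty (h : Aset s r w i ≠ ∅) : ∃ k, Good s r w i k := by
  by_contra hne
  exact h (if_neg hne)

theorem aset_subset_Icc : Aset s r w i ⊆ Icc 1 s := by
  unfold Aset
  split_ifs with h
  · exact Icc_subset_Icc_right (good_kmaxOf h).2.1
  · exact empty_subset _

theorem card_filter_notMem_aset : #{v : Fin s | v.1 + 1 ∉ Aset s r w i} = bOf s r w i := by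
  have hmap : map (Fin.valEmbedding.trans (addRightEmbedding 1))
      {v : Fin s | v.1 + 1 ∉ Aset s r w i} = Icc 1 s \ Aset s r w i := by
    ext j
    simp only [mem_map, mem_filter_univ, mem_sdiff, mem_Icc]
    constructor
    · rintro ⟨v, hv, rfl⟩
      exact ⟨by simp, hv⟩
    · rintro ⟨hj, hjA⟩
      exact ⟨⟨j - 1, by omega⟩, by simpa [Nat.sub_add_cancel hj.1], by simp [hj.1]⟩
  rw [← card_map, hmap, card_sdiff_of_subset aset_subset_Icc, Nat.card_Icc, bOf, Nat.add_sub_cancel]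

theorem sum_le_of_subset_aset {T : Finset ℕ} (hw : MonotoneOn w (Set.Icc 1 s))
    (hgood : ∃ k, Good s r w i k) (hTA : T ⊆ Aset s r w i) (hTi : #T < i) :
    ∑ j ∈ T, w j ≤ r - 1 := by
  obtain ⟨hik, hks, hsum⟩ := good_kmaxOf hgood
  rw [Aset, if_pos hgood] at hTA
  calc ∑ j ∈ T, w j
      ≤ ∑ j ∈ Ioc (kmaxOf s r w i - (i - 1)) (kmaxOf s r w i), w j :=
        sum_le_sum_Ioc_of_monotoneOn (hw.mono fun j hj ↦ ⟨hj.1, hj.2.trans hks⟩)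
          (fun _ _ ↦ Nat.zero_le _) hTA (Nat.le_sub_one_of_lt hTi)
    _ = ∑ j ∈ Icc (kmaxOf s r w i + 2 - i) (kmaxOf s r w i), w j := by
      congr 1
      ext j
      simp only [mem_Ioc, mem_Icc]
      omega
    _ ≤ r - 1 := hsum

theorem exists_notMem_aset_of_disconnects {G : SimpleGraph (Fin s)} {X : Finset (Fin s)}
    (hr : 0 < r) (hw : MonotoneOn w (Set.Icc 1 s))
    (hGw : WeightConnected G r (fun v ↦ w (v.1 + 1))) (hgood : ∃ k, Good s r w i k)
    (hX : Disconnects G (X : Set (Fin s))) (hXi : #X < i) :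
    ∃ v ∈ X, v.1 + 1 ∉ Aset s r w i := by
  by_contra! hXA
  let e : Fin s ↪ ℕ := Fin.valEmbedding.trans (addRightEmbedding 1)
  have hle : ∑ j ∈ X.map e, w j ≤ r - 1 :=
    sum_le_of_subset_aset hw hgood (map_subset_iff_subset_preimage.mpr fun v hv ↦ by
      simpa [e] using hXA v hv) (by rwa [card_map])
  rw [sum_map] at hle
  exact hGw X (Nat.lt_of_le_sub_one hr hle) hX

end InitialSegments

section DeletionCost

open Finset

/-- The cost `1 + #{i | l < i ≤ m, v ∉ A_i}` of deleting the vertex `v`, chosen so that every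
disconnecting set costs at least `m`. The element `v : Fin s` is the vertex `v + 1` of
`{1, …, s}`. -/
noncomputable def deletionCost (s r : ℕ) (w : ℕ → ℕ) (l m : ℕ) (v : Fin s) : ℕ :=
  1 + #{i ∈ Icc (l + 1) m | v.1 + 1 ∉ Aset s r w i}

variable {s l r m : ℕ} {w : ℕ → ℕ}

theorem sum_deletionCost (X : Finset (Fin s)) :
    ∑ v ∈ X, deletionCost s r w l m v =
      #X + ∑ i ∈ Icc (l + 1) m, #{v ∈ X | v.1 + 1 ∉ Aset s r w i} := by
  simp only [deletionCost, sum_add_distrib, ← card_eq_sum_ones]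
  congr 1
  exact sum_card_bipartiteAbove_eq_sum_card_bipartiteBelow _

theorem sum_deletionCost_compl_pair_le {u v : Fin s} (huv : u ≠ v) :
    ∑ x ∈ {u, v}ᶜ, deletionCost s r w l m x ≤ s - 2 + ∑ i ∈ Icc (l + 1) m, bOf s r w i := by
  rw [sum_deletionCost, card_compl, card_pair huv, Fintype.card_fin]
  gcongr with i
  rw [← card_filter_notMem_aset]
  exact card_le_card (filter_subset_filter _ (subset_univ _))

theorem weightConnected_deletionCost {G : SimpleGraph (Fin s)} (hr : 0 < r)
    (hw : MonotoneOn w (Set.Icc 1 s)) (hGl : LConnected G l)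
    (hGw : WeightConnected G r (fun v ↦ w (v.1 + 1))) (hm : ∃ k, Good s r w m k) :
    WeightConnected G m (deletionCost s r w l m) := by
  intro X hcost hX
  have hlX : l ≤ #X := not_lt.mp fun hlt ↦ hGl.2 X hlt hX
  have hmeet : ∀ i ∈ Icc (#X + 1) m, 1 ≤ #{v ∈ X | v.1 + 1 ∉ Aset s r w i} := by
    intro i hi
    rw [mem_Icc] at hi
    have hgood : ∃ k, Good s r w i k := hm.imp fun _ hk ↦ hk.anti hi.2
    obtain ⟨v, hvX, hvA⟩ := exists_notMem_aset_of_disconnects hr hw hGw hgood hX hi.1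
    exact card_pos.mpr ⟨v, mem_filter.mpr ⟨hvX, hvA⟩⟩
  refine hcost.not_ge ?_
  calc m ≤ #X + #(Icc (#X + 1) m) := by rw [Nat.card_Icc]; omega
    _ ≤ #X + ∑ i ∈ Icc (#X + 1) m, #{v ∈ X | v.1 + 1 ∉ Aset s r w i} := by
      rw [card_eq_sum_ones (Icc _ _)]
      gcongr with i hi
      exact hmeet i hi
    _ ≤ #X + ∑ i ∈ Icc (l + 1) m, #{v ∈ X | v.1 + 1 ∉ Aset s r w i} := by gcongr
    _ = ∑ v ∈ X, deletionCost s r w l m v := (sum_deletionCost X).symm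

end DeletionCost

theorem hmaxOf_mem {s l r : ℕ} {w : ℕ → ℕ} (hs : l + 1 ≤ s) (hA : Aset s r w (l + 1) ≠ ∅) :
    hmaxOf s l r w ∈ {i | l + 1 ≤ i ∧ i ≤ s ∧ Aset s r w i ≠ ∅} :=
  Nat.sSup_mem ⟨l + 1, le_rfl, hs, hA⟩ ⟨s, fun _ hi ↦ hi.2.1⟩

theorem diam_le_of_lConnected_weightConnected_general {s l r m : ℕ} {w : ℕ → ℕ}
    {G : SimpleGraph (Fin s)} (hr : 0 < r) (hm : 0 < m) (hw : MonotoneOn w (Set.Icc 1 s))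
    (hGl : LConnected G l) (hGw : WeightConnected G r (fun v ↦ w (v.1 + 1)))
    (hA : Aset s r w m ≠ ∅) :
    G.ediam ≤ ((s - 2 + ∑ i ∈ Finset.Icc (l + 1) m, bOf s r w i) / m + 1 : ℕ) :=
  (weightConnected_deletionCost hr hw hGl hGw (exists_good_of_aset_ne_empty hA)).ediam_le hm
    fun _ _ huv ↦ sum_deletionCost_compl_pair_le huv

/-- Let `G` be a graph on the vertex set `{1, …, s}` (modelled as `Fin s`,
vertex `v` corresponding to the index `v + 1`), with positive weights `w_1 ≤ ⋯ ≤ w_s`.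
If `G` is `l`-connected and `(r,w)`-connected with `r ≥ l ≥ 1`, `s ≥ l + 1`, and
`A_{l+1} ≠ ∅`, then with `h` and `b_i` as above,
`diam G ≤ ⌊(s - 2 + Σ_{i=l+1}^{h} b_i)/h⌋ + 1`. -/
theorem diam_le_of_lConnected_weightConnected
    (s l r : ℕ) (hl : 1 ≤ l) (hlr : l ≤ r) (hs : l + 1 ≤ s)
    (w : ℕ → ℕ)
    (hwpos : ∀ j, 1 ≤ j → j ≤ s → 0 < w j)
    (hwmono : ∀ j j', 1 ≤ j → j ≤ j' → j' ≤ s → w j ≤ w j')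
    (G : SimpleGraph (Fin s))
    (hGl : LConnected G l)
    (hGw : WeightConnected G r (fun v => w (v.1 + 1)))
    (hA : Aset s r w (l + 1) ≠ ∅) :
    G.ediam ≤
      ((s - 2 + ∑ i ∈ Finset.Icc (l + 1) (hmaxOf s l r w), bOf s r w i) / hmaxOf s l r w + 1 :
        ℕ) := by
  obtain ⟨hlh, -, hAh⟩ := hmaxOf_mem hs hA
  exact diam_le_of_lConnected_weightConnected_general (by omega) (by omega)
    (fun j hj j' hj' hjj' ↦ hwmono j j' hj.1 hjj' hj'.2) hGl hGw hAh
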